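/- Let α ∈ (1,2), T > 0, L > 0, and let f : [0,T] × ℝ → ℝ be continuous with |f(t,x) − f(t,y)| ≤ L|x − y| for all t, x, y, and with f(t,0) = 0 for all t ∈ [0,T]. For t ∈ [0,T] define a₋(t) := inf{ f(τ,x)/x : τ ∈ [0,t], x ≠ 0 } and a*(t) := sup{ f(τ,x)/x : τ ∈ [0,t], x ≠ 0 }. Let y : [0,T] → ℝ be continuous with y(t) = y₀ + y₁ t + (1/Γ(α)) ∫₀ᵗ (t−s)^{α−1} f(s, y(s)) ds for all t, where y₀ ≤ 0 and y₁ ≤ 0. Suppose T* ∈ (0,T] is such that for all t ∈ [0,T*]: E_{α,α}(−L t^α) > 0, E_{α,2}(−L t^α) > 0, and (E_{α,1}(−L t^α) > 0 or y₀ = 0). Then for all t ∈ [0,T*]: y₀ E_{α,1}(a*(t) t^α) + y₁ t E_{α,2}(a*(t) t^α) ≤ y(t) ≤ y₀ E_{α,1}(a₋(t) t^α) + y₁ t E_{α,2}(a₋(t) t^α). -/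

import Mathlib

/-- The two-parameter Mittag-Leffler function `E_{α,β}(z) = ∑ₖ zᵏ / Γ(αk + β)`. -/
noncomputable def mlE (α β z : ℝ) : ℝ := ∑' k : ℕ, z ^ k / Real.Gamma (α * k + β)

section MLHelpers

open MeasureTheory Set

lemma ml_beta_int {a b t : ℝ} (ha : 1 < a) (hb : 0 < b) (ht : 0 ≤ t) :
    ∫ s in (0:ℝ)..t, (t - s) ^ (a - 1) * s ^ (b - 1)
      = Real.Gamma a * Real.Gamma b / Real.Gamma (a + b) * t ^ (a + b - 1) := by
  rcases ht.eq_or_lt with rfl | ht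
  · rw [Real.zero_rpow (by linarith)]; simp
  have h := Complex.betaIntegral_scaled (b : ℂ) (a : ℂ) ht
  rw [Complex.betaIntegral_eq_Gamma_mul_div _ _ (by simpa using hb)
    (by simp; linarith)] at h
  apply Complex.ofReal_injective
  rw [← intervalIntegral.integral_ofReal]
  have e : ∀ s ∈ uIcc (0:ℝ) t, (((t - s) ^ (a - 1) * s ^ (b - 1) : ℝ) : ℂ)
      = (s : ℂ) ^ ((b:ℂ) - 1) * ((t : ℂ) - s) ^ ((a:ℂ) - 1) := by
    intro s hs
    rw [uIcc_of_le ht.le] at hs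
    rw [Complex.ofReal_mul, Complex.ofReal_cpow (by linarith [hs.2]), Complex.ofReal_cpow hs.1]
    push_cast
    ring
  rw [intervalIntegral.integral_congr e, h]
  push_cast [← Complex.Gamma_ofReal]
  rw [Complex.ofReal_cpow ht.le]
  push_cast
  rw [add_comm (b : ℂ) a]
  ring

lemma ml_beta_int_shift {a b r t : ℝ} (ha : 1 < a) (hb : 0 < b) (ht : r ≤ t) :
    ∫ s in r..t, (t - s) ^ (a - 1) * (s - r) ^ (b - 1)
      = Real.Gamma a * Real.Gamma b / Real.Gamma (a + b) * (t - r) ^ (a + b - 1) := by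
  rw [← ml_beta_int ha hb (sub_nonneg.2 ht)]
  have := intervalIntegral.integral_comp_sub_right (a := r) (b := t)
    (fun s => (t - r - s) ^ (a - 1) * s ^ (b - 1)) r
  simp only [sub_self] at this
  rw [← this]
  congr 1; ext s; congr 2; ring

lemma ml_ker_cont {b : ℝ} (hb : 1 < b) : Continuous fun x : ℝ => (max x 0) ^ (b - 1) := by
  exact (continuous_id.max continuous_const).rpow_const (fun _ => Or.inr (by linarith))

lemma ml_semigroup {a b t : ℝ} (ha : 1 < a) (hb : 1 < b) (ht : 0 ≤ t) {h : ℝ → ℝ}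
    (hh : Continuous h) :
    ∫ s in (0:ℝ)..t, (t - s) ^ (a - 1) * ∫ r in (0:ℝ)..s, (s - r) ^ (b - 1) * h r
      = Real.Gamma a * Real.Gamma b / Real.Gamma (a + b)
        * ∫ r in (0:ℝ)..t, (t - r) ^ (a + b - 1) * h r := by
  have ka := ml_ker_cont ha
  have kb := ml_ker_cont hb
  have inner : ∀ s ∈ uIcc (0:ℝ) t, (t - s) ^ (a - 1) * ∫ r in (0:ℝ)..s, (s - r) ^ (b - 1) * h r
      = ∫ r in (0:ℝ)..t, (max (t - s) 0) ^ (a - 1) * ((max (s - r) 0) ^ (b - 1) * h r) := by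
    intro s hs
    rw [uIcc_of_le ht] at hs
    have c : Continuous fun r => (max (s - r) 0) ^ (b - 1) * h r :=
      (kb.comp (continuous_const.sub continuous_id)).mul hh
    rw [intervalIntegral.integral_const_mul, max_eq_left (by linarith [hs.2] : 0 ≤ t - s),
      ← intervalIntegral.integral_add_adjacent_intervals (c.intervalIntegrable 0 s)
        (c.intervalIntegrable s t)]
    have z : ∫ r in s..t, (max (s - r) 0) ^ (b - 1) * h r = 0 := by
      rw [intervalIntegral.integral_congr (g := fun _ => (0:ℝ))]
      · simp
      · intro r hr
        rw [uIcc_of_le hs.2] at hr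
        simp only
        rw [max_eq_right (by linarith [hr.1]), Real.zero_rpow (by linarith), zero_mul]
    rw [z, add_zero]
    congr 1
    apply intervalIntegral.integral_congr
    intro r hr
    rw [uIcc_of_le hs.1] at hr
    simp only
    rw [max_eq_left (by linarith [hr.2])]
  rw [intervalIntegral.integral_congr inner, intervalIntegral_intervalIntegral_swap,
    ← intervalIntegral.integral_const_mul]
  · apply intervalIntegral.integral_congr
    intro r hr
    rw [uIcc_of_le ht] at hr
    simp only
    have c : Continuous fun s => (max (t - s) 0) ^ (a - 1) * ((max (s - r) 0) ^ (b - 1) * h r) :=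
      (ka.comp (continuous_const.sub continuous_id)).mul
        ((kb.comp (continuous_id.sub continuous_const)).mul continuous_const)
    rw [← intervalIntegral.integral_add_adjacent_intervals (c.intervalIntegrable 0 r)
        (c.intervalIntegrable r t)]
    have z : ∫ s in (0:ℝ)..r, (max (t - s) 0) ^ (a - 1) * ((max (s - r) 0) ^ (b - 1) * h r) = 0 := by
      rw [intervalIntegral.integral_congr (g := fun _ => (0:ℝ))]
      · simp
      · intro s hs
        rw [uIcc_of_le hr.1] at hs
        simp only
        rw [max_eq_right (by linarith [hs.2] : s - r ≤ 0), Real.zero_rpow (by linarith), zero_mul,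
          mul_zero]
    rw [z, zero_add, ← mul_assoc, ← ml_beta_int_shift ha (by linarith) hr.2,
      ← intervalIntegral.integral_mul_const]
    apply intervalIntegral.integral_congr
    intro s hs
    rw [uIcc_of_le hr.2] at hs
    simp only
    rw [max_eq_left (by linarith [hs.2]), max_eq_left (by linarith [hs.1]), mul_assoc]
  · have c : Continuous (Function.uncurry fun s r : ℝ =>
        (max (t - s) 0) ^ (a - 1) * ((max (s - r) 0) ^ (b - 1) * h r)) := by
      refine (ka.comp (continuous_const.sub continuous_fst)).mul
        ((kb.comp (continuous_fst.sub continuous_snd)).mul (hh.comp continuous_snd))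
    rw [uIoc_of_le ht]
    exact (c.continuousOn.integrableOn_compact (isCompact_Icc.prod isCompact_Icc)).mono_set
      (prod_mono Ioc_subset_Icc_self Ioc_subset_Icc_self)

lemma ml_gamma_ge {α β : ℝ} (hα : 1 < α) (hβ : 1 ≤ β) (k : ℕ) (hk : 1 ≤ k) :
    (k.factorial : ℝ) ≤ Real.Gamma (α * k + β) := by
  rw [← Real.Gamma_nat_eq_factorial]
  have hk' : (1:ℝ) ≤ k := by exact_mod_cast hk
  have : (k:ℝ) + 1 ≤ α * k + β := by nlinarith
  exact Real.Gamma_strictMonoOn_Ici.monotoneOn (by simp; linarith) (by simp; linarith) this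

lemma ml_gamma_pos {α β : ℝ} (hα : 1 < α) (hβ : 1 ≤ β) (k : ℕ) :
    0 < Real.Gamma (α * k + β) := by
  apply Real.Gamma_pos_of_pos
  have : (0:ℝ) ≤ k := Nat.cast_nonneg k
  nlinarith

lemma ml_summable {α β : ℝ} (hα : 1 < α) (hβ : 1 ≤ β) (z : ℝ) :
    Summable fun k : ℕ => z ^ k / Real.Gamma (α * k + β) := by
  rw [← summable_nat_add_iff 1]
  refine Summable.of_norm_bounded ((summable_nat_add_iff 1).2 (Real.summable_pow_div_factorial |z|)) ?_
  intro k
  have := ml_gamma_ge hα hβ (k+1) (by omega)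
  rw [norm_div, norm_pow, Real.norm_eq_abs, Real.norm_eq_abs, abs_of_pos (ml_gamma_pos hα hβ _)]
  gcongr

lemma ml_hasSum {α β : ℝ} (hα : 1 < α) (hβ : 1 ≤ β) (z : ℝ) :
    HasSum (fun k : ℕ => z ^ k / Real.Gamma (α * k + β)) (mlE α β z) :=
  (ml_summable hα hβ z).hasSum

lemma ml_cont {α β : ℝ} (hα : 1 < α) (hβ : 1 ≤ β) : Continuous (mlE α β) := by
  rw [continuous_iff_continuousAt]
  intro z
  have : ContinuousOn (mlE α β) (Metric.closedBall 0 (|z| + 1)) := by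
    refine continuousOn_tsum (fun k => by fun_prop) (ml_summable hα hβ (|z| + 1)) ?_
    intro k x hx
    rw [norm_div, norm_pow, Real.norm_eq_abs, Real.norm_eq_abs, abs_of_pos (ml_gamma_pos hα hβ _)]
    have : |x| ≤ |z| + 1 := by simpa using hx
    have := ml_gamma_pos hα hβ k
    gcongr
  refine this.continuousAt (Metric.closedBall_mem_nhds_of_mem ?_)
  simp

lemma ml_nonneg_pos {α β : ℝ} (hα : 1 < α) (hβ : 1 ≤ β) {z : ℝ} (hz : 0 ≤ z) : 0 ≤ mlE α β z :=
  tsum_nonneg fun k => div_nonneg (pow_nonneg hz k) (ml_gamma_pos hα hβ k).le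

lemma ml_series_int {α lam t : ℝ} (hα : 1 < α) (ht : 0 ≤ t) {h : ℝ → ℝ}
    (hh : Continuous h) :
    HasSum (fun k : ℕ => lam ^ k / Real.Gamma (α * k + α)
        * ∫ s in (0:ℝ)..t, (t - s) ^ (α * k + α - 1) * h s)
      (∫ s in (0:ℝ)..t, (t - s) ^ (α - 1) * mlE α α (lam * (t - s) ^ α) * h s) := by
  obtain ⟨M, hM⟩ := (isCompact_Icc (a := (0:ℝ)) (b := t)).exists_bound_of_continuousOn hh.continuousOn
  simp_rw [← intervalIntegral.integral_const_mul]
  have hk0 : ∀ k : ℕ, 0 ≤ α * k := fun k => by positivity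
  apply intervalIntegral.hasSum_integral_of_dominated_convergence (ι := ℕ)
    (fun k _ => t ^ (α - 1) * ((|lam| * t ^ α) ^ k / Real.Gamma (α * k + α)) * M)
  · intro k
    apply Continuous.aestronglyMeasurable
    have : Continuous fun s => (t - s) ^ (α * k + α - 1) :=
      (continuous_const.sub continuous_id).rpow_const (fun _ => Or.inr (by linarith [hk0 k]))
    fun_prop
  · intro k
    refine Filter.Eventually.of_forall fun s hs => ?_
    rw [uIoc_of_le ht] at hs
    have hts : 0 ≤ t - s := by linarith [hs.2]
    have e : (t - s) ^ (α * k + α - 1) ≤ t ^ (α - 1) * (t ^ α) ^ k := by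
      calc (t - s) ^ (α * k + α - 1) ≤ t ^ (α * k + α - 1) :=
            Real.rpow_le_rpow hts (by linarith [hs.1]) (by linarith [hk0 k])
        _ = _ := by
            rw [← Real.rpow_natCast, ← Real.rpow_mul ht, ← Real.rpow_add_of_nonneg ht (by linarith) (hk0 k)]
            congr 1; ring
    have g := ml_gamma_pos hα hα.le k
    have hm := hM s ⟨hs.1.le, hs.2⟩
    rw [norm_mul, norm_mul, norm_div, norm_pow, Real.norm_eq_abs, Real.norm_eq_abs, Real.norm_eq_abs,
      abs_of_pos g, abs_of_nonneg (Real.rpow_nonneg hts _)]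
    calc _ ≤ |lam| ^ k / Real.Gamma (α * k + α) * ((t ^ (α - 1) * (t ^ α) ^ k) * M) := by gcongr
      _ = _ := by rw [mul_pow]; ring
  · refine Filter.Eventually.of_forall fun s hs => ?_
    exact ((ml_summable hα hα.le _).mul_left _).mul_right _
  · exact intervalIntegrable_const
  · refine Filter.Eventually.of_forall fun s hs => ?_
    rw [uIoc_of_le ht] at hs
    have hts : 0 ≤ t - s := by linarith [hs.2]
    have := ((ml_hasSum hα hα.le (lam * (t - s) ^ α)).mul_left ((t-s)^(α-1))).mul_right (h s)
    refine (congrArg (fun q => HasSum q _) (funext fun k : ℕ => ?_)).mpr this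
    have : (t - s) ^ (α * k + α - 1) = (t-s) ^ (α - 1) * ((t-s) ^ α) ^ k := by
      rw [← Real.rpow_natCast, ← Real.rpow_mul hts, ← Real.rpow_add_of_nonneg hts (by linarith) (hk0 k)]
      congr 1; ring
    rw [this, mul_pow]; ring

lemma ml_finite {α lam y0 y1 T : ℝ} (hα : 1 < α) {y g : ℝ → ℝ}
    (hyc : Continuous y) (hgc : Continuous g)
    (hy : ∀ t ∈ Icc (0:ℝ) T, y t = y0 + y1 * t
        + (1 / Real.Gamma α) * ∫ s in (0 : ℝ)..t, (t - s) ^ (α - 1) * (lam * y s + g s))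
    {t : ℝ} (ht : t ∈ Icc (0:ℝ) T) (n : ℕ) :
    y t = y0 * ∑ k ∈ Finset.range (n + 1), (lam * t ^ α) ^ k / Real.Gamma (α * k + 1)
      + y1 * (t * ∑ k ∈ Finset.range (n + 1), (lam * t ^ α) ^ k / Real.Gamma (α * k + 2))
      + (∑ k ∈ Finset.range (n + 1), lam ^ k / Real.Gamma (α * k + α)
        * ∫ s in (0:ℝ)..t, (t - s) ^ (α * k + α - 1) * g s)
      + lam * (lam ^ n / Real.Gamma (α * n + α)
        * ∫ s in (0:ℝ)..t, (t - s) ^ (α * n + α - 1) * y s) := by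
  have hc : ∀ b : ℝ, 1 < b → Continuous fun s => (t - s) ^ (b - 1) := fun b hb =>
    (continuous_const.sub continuous_id).rpow_const (fun _ => Or.inr (by linarith))
  have split : ∀ b : ℝ, 1 < b → ∫ s in (0 : ℝ)..t, (t - s) ^ (b - 1) * (lam * y s + g s)
      = lam * (∫ s in (0 : ℝ)..t, (t - s) ^ (b - 1) * y s)
        + ∫ s in (0 : ℝ)..t, (t - s) ^ (b - 1) * g s := by
    intro b hb
    have hcb := hc b hb
    rw [← intervalIntegral.integral_const_mul, ← intervalIntegral.integral_add]
    · congr 1; ext s; ring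
    · exact Continuous.intervalIntegrable (by fun_prop) _ _
    · exact Continuous.intervalIntegrable (by fun_prop) _ _
  induction n with
  | zero =>
    rw [hy t ht, split α hα]
    simp
    ring
  | succ n ih =>
    rw [ih]
    set b : ℝ := α * n + α with hb
    have hn0 : (0:ℝ) ≤ n := Nat.cast_nonneg n
    have hb1 : 1 < b := by rw [hb]; nlinarith
    have hcb := hc b hb1
    have hGb : Real.Gamma b ≠ 0 := (Real.Gamma_pos_of_pos (by linarith)).ne'
    have hGa : Real.Gamma α ≠ 0 := (Real.Gamma_pos_of_pos (by linarith)).ne'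
    -- substitute the equation in the remainder
    have key : ∫ s in (0:ℝ)..t, (t - s) ^ (b - 1) * y s
        = y0 * (Real.Gamma b / Real.Gamma (b + 1) * t ^ b)
          + y1 * (Real.Gamma b / Real.Gamma (b + 2) * t ^ (b + 1))
          + Real.Gamma b / Real.Gamma (b + α) *
            (∫ s in (0 : ℝ)..t, (t - s) ^ (b + α - 1) * (lam * y s + g s)) := by
      have e1 := ml_beta_int (t := t) hb1 (b := 1) one_pos ht.1
      have e2 := ml_beta_int (t := t) hb1 (b := 2) two_pos ht.1
      have e3 := ml_semigroup (t := t) hb1 hα ht.1 (h := fun s => lam * y s + g s) (by fun_prop)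
      have cI : ContinuousOn (fun s => ∫ r in (0:ℝ)..s, (s - r) ^ (α - 1) * (lam * y r + g r))
          (Icc 0 t) := by
        have : ContinuousOn (fun s => Real.Gamma α * (y s - y0 - y1 * s)) (Icc 0 t) := by fun_prop
        refine this.congr fun s hs => ?_
        simp only
        rw [hy s ⟨hs.1, hs.2.trans ht.2⟩]
        field_simp
        ring
      have eq : ∫ s in (0:ℝ)..t, (t - s) ^ (b - 1) * y s =
          ∫ s in (0:ℝ)..t, (y0 * ((t - s) ^ (b - 1) * s ^ ((1:ℝ) - 1))
            + y1 * ((t - s) ^ (b - 1) * s ^ ((2:ℝ) - 1)))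
            + (1 / Real.Gamma α) * ((t - s) ^ (b - 1) *
              ∫ r in (0:ℝ)..s, (s - r) ^ (α - 1) * (lam * y r + g r)) := by
        apply intervalIntegral.integral_congr
        intro s hs
        rw [uIcc_of_le ht.1] at hs
        simp only
        rw [hy s ⟨hs.1, hs.2.trans ht.2⟩]
        norm_num
        ring
      rw [eq, intervalIntegral.integral_add, intervalIntegral.integral_add,
        intervalIntegral.integral_const_mul, intervalIntegral.integral_const_mul,
        intervalIntegral.integral_const_mul, e1, e2, e3, Real.Gamma_one,
        Real.Gamma_two]
      · rw [show b + 1 - 1 = b by ring, show b + 2 - 1 = b + 1 by ring]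
        field_simp
      · norm_num
        exact Continuous.intervalIntegrable (by fun_prop) _ _
      · norm_num
        exact Continuous.intervalIntegrable (by fun_prop) _ _
      · norm_num
        exact Continuous.intervalIntegrable (by fun_prop) _ _
      · apply ContinuousOn.intervalIntegrable
        rw [uIcc_of_le ht.1]
        exact continuousOn_const.mul (hcb.continuousOn.mul cI)
    rw [key, split (b + α) (by linarith)]
    rw [Finset.sum_range_succ _ (n + 1), Finset.sum_range_succ _ (n + 1),
      Finset.sum_range_succ _ (n + 1)]
    have hbn : α * ((n + 1 : ℕ) : ℝ) = b := by push_cast; rw [hb]; ring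
    rw [hbn]
    have ep : (t ^ α) ^ (n + 1) = t ^ b := by
      rw [← Real.rpow_natCast, ← Real.rpow_mul ht.1, hbn]
    have ep1 : t ^ (b + 1) = t * t ^ b := by
      rw [Real.rpow_add_of_nonneg ht.1 (by linarith) zero_le_one, Real.rpow_one, mul_comm]
    rw [mul_pow, ep, ep1]
    have := (Real.Gamma_pos_of_pos (show 0 < b + 1 by linarith)).ne'
    have := (Real.Gamma_pos_of_pos (show 0 < b + 2 by linarith)).ne'
    have := (Real.Gamma_pos_of_pos (show 0 < b + α by linarith)).ne'
    generalize (∫ s in (0 : ℝ)..t, (t - s) ^ (b + α - 1) * y s) = Y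
    generalize (∫ s in (0 : ℝ)..t, (t - s) ^ (b + α - 1) * g s) = G
    field_simp
    ring

lemma ml_voc {α lam y0 y1 T : ℝ} (hα : 1 < α) {y g : ℝ → ℝ}
    (hyc : Continuous y) (hgc : Continuous g)
    (hy : ∀ t ∈ Icc (0:ℝ) T, y t = y0 + y1 * t
        + (1 / Real.Gamma α) * ∫ s in (0 : ℝ)..t, (t - s) ^ (α - 1) * (lam * y s + g s))
    {t : ℝ} (ht : t ∈ Icc (0:ℝ) T) :
    y t = y0 * mlE α 1 (lam * t ^ α) + y1 * (t * mlE α 2 (lam * t ^ α))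
      + ∫ s in (0:ℝ)..t, (t - s) ^ (α - 1) * mlE α α (lam * (t - s) ^ α) * g s := by
  have h1 := ((ml_hasSum hα le_rfl (lam * t ^ α)).tendsto_sum_nat).const_mul y0
  have h2 := (((ml_hasSum hα one_le_two (lam * t ^ α)).tendsto_sum_nat).const_mul t).const_mul y1
  have h3 := (ml_series_int (lam := lam) hα ht.1 hgc).tendsto_sum_nat
  have h4 := ((ml_series_int (lam := lam) hα ht.1 hyc).summable.tendsto_atTop_zero).const_mul lam
  have h := (((h1.add h2).add h3).comp (Filter.tendsto_add_atTop_nat 1)).add h4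
  rw [mul_zero, add_zero] at h
  refine tendsto_nhds_unique (tendsto_const_nhds (f := Filter.atTop)) (h.congr fun n => ?_)
  exact (ml_finite hα hyc hgc hy ht n).symm

lemma ml_gronwall {T C : ℝ} {u : ℝ → ℝ} (hu : Continuous u) (h0 : ∀ t, 0 ≤ u t)
    (h : ∀ t ∈ Icc (0:ℝ) T, u t ≤ C * ∫ s in (0:ℝ)..t, u s) :
    ∀ t ∈ Icc (0:ℝ) T, u t = 0 := by
  have hd : ∀ x, HasDerivAt (fun t => ∫ s in (0:ℝ)..t, u s) (u x) x := fun x =>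
    intervalIntegral.integral_hasDerivAt_right (hu.intervalIntegrable _ _)
      (hu.stronglyMeasurableAtFilter _ _) hu.continuousAt
  have hn : ∀ x, 0 ≤ x → 0 ≤ ∫ s in (0:ℝ)..x, u s := fun x hx =>
    intervalIntegral.integral_nonneg hx fun s _ => h0 s
  have := norm_le_gronwallBound_of_norm_deriv_right_le (f := fun t => ∫ s in (0:ℝ)..t, u s)
    (f' := u) (δ := 0) (K := C) (ε := 0) (a := 0) (b := T)
    (fun x _ => (hd x).continuousAt.continuousWithinAt)
    (fun x _ => (hd x).hasDerivWithinAt) (by simp)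
    (fun x hx => by
      rw [Real.norm_eq_abs, Real.norm_eq_abs, abs_of_nonneg (h0 x), abs_of_nonneg (hn x hx.1), add_zero]
      exact h x ⟨hx.1, hx.2.le⟩)
  intro t ht
  have h1 := this t ht
  rw [gronwallBound_ε0_δ0] at h1
  have h2 := h t ht
  rw [norm_le_zero_iff.1 h1, mul_zero] at h2
  exact le_antisymm h2 (h0 t)

/-- positivity transfers from `-L` to any `lam ≥ -L`. -/
lemma ml_kernel_nonneg {α L lam S : ℝ} (hα : 1 < α) (hL : 0 < L) (hlam : -L ≤ lam)
    (hpos : ∀ t ∈ Icc (0:ℝ) S, 0 < mlE α α (-(L * t ^ α))) {r : ℝ} (hr : r ∈ Icc (0:ℝ) S) :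
    0 ≤ mlE α α (lam * r ^ α) := by
  rcases le_total 0 lam with h | h
  · exact ml_nonneg_pos hα hα.le (mul_nonneg h (Real.rpow_nonneg hr.1 _))
  · have hq0 : 0 ≤ -lam / L := div_nonneg (by linarith) hL.le
    have hq1 : -lam / L ≤ 1 := by rw [div_le_one hL]; linarith
    have hp0 := Real.rpow_nonneg hq0 (1/α)
    have hp1 : (-lam / L) ^ (1/α) ≤ 1 := Real.rpow_le_one hq0 hq1 (by positivity)
    have := hpos ((-lam / L) ^ (1/α) * r) ⟨mul_nonneg hp0 hr.1, by nlinarith [hr.1, hr.2]⟩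
    rw [Real.mul_rpow hp0 hr.1, ← Real.rpow_mul hq0, one_div_mul_cancel (by linarith),
      Real.rpow_one, show -(L * (-lam / L * r ^ α)) = lam * r ^ α by field_simp] at this
    exact this.le

end MLHelpers

/-- Nonlinear separation bounds for nonpositive initial data, under the
assumption `f(t,0) = 0` (Theorem 2.11(b) of the paper). -/
theorem nonlinear_bounds_nonpos_data
    (α T Tstar L y₀ y₁ : ℝ) (hα₁ : 1 < α) (hα₂ : α < 2) (hT : 0 < T) (hL : 0 < L)
    (f : ℝ → ℝ → ℝ)
    (hf_cont : ContinuousOn (fun p : ℝ × ℝ => f p.1 p.2) (Set.Icc 0 T ×ˢ Set.univ))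
    (hf_lip : ∀ t ∈ Set.Icc (0 : ℝ) T, ∀ x z : ℝ, |f t x - f t z| ≤ L * |x - z|)
    (hf0 : ∀ t ∈ Set.Icc (0 : ℝ) T, f t 0 = 0)
    (alow astar : ℝ → ℝ)
    (halow : ∀ t ∈ Set.Icc (0 : ℝ) T,
      alow t = sInf {r : ℝ | ∃ τ ∈ Set.Icc (0 : ℝ) t, ∃ x : ℝ, x ≠ 0 ∧ r = f τ x / x})
    (hastar : ∀ t ∈ Set.Icc (0 : ℝ) T,
      astar t = sSup {r : ℝ | ∃ τ ∈ Set.Icc (0 : ℝ) t, ∃ x : ℝ, x ≠ 0 ∧ r = f τ x / x})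
    (y : ℝ → ℝ) (hy_cont : ContinuousOn y (Set.Icc 0 T))
    (hy : ∀ t ∈ Set.Icc (0 : ℝ) T,
      y t = y₀ + y₁ * t
        + (1 / Real.Gamma α) * ∫ s in (0 : ℝ)..t, (t - s) ^ (α - 1) * f s (y s))
    (hy₀ : y₀ ≤ 0) (hy₁ : y₁ ≤ 0)
    (hTstar : 0 < Tstar) (hTstarT : Tstar ≤ T)
    (hcond : ∀ t ∈ Set.Icc (0 : ℝ) Tstar,
      mlE α α (-(L * t ^ α)) > 0 ∧ mlE α 2 (-(L * t ^ α)) > 0 ∧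
        (mlE α 1 (-(L * t ^ α)) > 0 ∨ y₀ = 0)) :
    ∀ t ∈ Set.Icc (0 : ℝ) Tstar,
      y₀ * mlE α 1 (astar t * t ^ α) + y₁ * (t * mlE α 2 (astar t * t ^ α)) ≤ y t ∧
        y t ≤ y₀ * mlE α 1 (alow t * t ^ α) + y₁ * (t * mlE α 2 (alow t * t ^ α)) := by
  set P : ℝ → ℝ := fun s => max 0 (min s T) with hP
  have hPc : Continuous P := by fun_prop
  have hPm : ∀ s, P s ∈ Set.Icc 0 T := fun s =>
    ⟨le_max_left _ _, max_le hT.le (min_le_right _ _)⟩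
  have hPe : ∀ s ∈ Set.Icc 0 T, P s = s := fun s hs => by
    simp only [hP]; rw [min_eq_left hs.2, max_eq_right hs.1]
  set Y : ℝ → ℝ := fun s => y (P s) with hY
  set F : ℝ → ℝ := fun s => f (P s) (Y s) with hF
  have hYc : Continuous Y := hy_cont.comp_continuous hPc hPm
  have hFc : Continuous F :=
    hf_cont.comp_continuous (f := fun s => (P s, Y s)) (hPc.prodMk hYc)
      (fun s => ⟨hPm s, Set.mem_univ _⟩)
  have hYe : ∀ s ∈ Set.Icc 0 T, Y s = y s := fun s hs => by simp only [hY]; rw [hPe s hs]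
  have hFe : ∀ s ∈ Set.Icc 0 T, F s = f s (y s) := fun s hs => by
    simp only [hF]; rw [hPe s hs, hYe s hs]
  -- variation of constants for every parameter
  have voc : ∀ lam : ℝ, ∀ t ∈ Set.Icc 0 T,
      Y t = y₀ * mlE α 1 (lam * t ^ α) + y₁ * (t * mlE α 2 (lam * t ^ α))
      + ∫ s in (0:ℝ)..t, (t - s) ^ (α - 1) * mlE α α (lam * (t - s) ^ α) * (F s - lam * Y s) := by
    intro lam t ht
    refine ml_voc (T := T) hα₁ hYc (by fun_prop) (fun t ht => ?_) ht
    rw [hYe t ht, hy t ht]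
    congr 2
    apply intervalIntegral.integral_congr
    intro s hs
    rw [Set.uIcc_of_le ht.1] at hs
    simp only
    rw [hFe s ⟨hs.1, hs.2.trans ht.2⟩]
    ring
  have hflip : ∀ t ∈ Set.Icc 0 T, ∀ x, |f t x| ≤ L * |x| := fun t ht x => by
    have := hf_lip t ht x 0
    rwa [hf0 t ht, sub_zero, sub_zero] at this
  have hKpos : ∀ lam : ℝ, -L ≤ lam → ∀ r ∈ Set.Icc 0 Tstar, 0 ≤ mlE α α (lam * r ^ α) :=
    fun lam hlam r hr => ml_kernel_nonneg hα₁ hL hlam (fun t ht => (hcond t ht).1) hr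
  have hKc : ∀ lam : ℝ, Continuous fun r : ℝ => r ^ (α - 1) * mlE α α (lam * r ^ α) := fun lam =>
    (Real.continuous_rpow_const (by linarith)).mul
      ((ml_cont hα₁ hα₁.le).comp (continuous_const.mul (Real.continuous_rpow_const (by linarith))))
  -- nonpositivity of the solution
  have hneg : ∀ t ∈ Set.Icc 0 Tstar, Y t ≤ 0 := by
    obtain ⟨M, hM⟩ := (isCompact_Icc (a := (0:ℝ)) (b := Tstar)).exists_bound_of_continuousOn
      (hKc (-L)).continuousOn
    have hu : Continuous fun s => max (Y s) 0 := by fun_prop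
    have := ml_gronwall (T := Tstar) (C := M * (2 * L)) hu (fun t => le_max_right _ _) ?_
    · intro t ht
      exact max_eq_right_iff.1 (this t ht)
    intro t ht
    have hM0 : 0 ≤ M := (norm_nonneg _).trans (hM 0 ⟨le_rfl, hTstar.le⟩)
    apply max_le
    · rw [voc (-L) t ⟨ht.1, ht.2.trans hTstarT⟩]
      obtain ⟨-, c2, c3⟩ := hcond t ht
      have e1 : y₀ * mlE α 1 (-L * t ^ α) ≤ 0 := by
        rcases c3 with c | c
        · rw [neg_mul]; exact mul_nonpos_of_nonpos_of_nonneg hy₀ c.le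
        · simp [c]
      have e2 : y₁ * (t * mlE α 2 (-L * t ^ α)) ≤ 0 := by
        rw [neg_mul]; exact mul_nonpos_of_nonpos_of_nonneg hy₁ (mul_nonneg ht.1 c2.le)
      have e3 : ∫ s in (0:ℝ)..t, (t - s) ^ (α - 1) * mlE α α (-L * (t - s) ^ α) * (F s - -L * Y s)
          ≤ ∫ s in (0:ℝ)..t, M * (2 * L) * max (Y s) 0 := by
        have hKt : Continuous fun s => (t - s) ^ (α - 1) * mlE α α (-L * (t - s) ^ α) :=
          (hKc (-L)).comp (continuous_const.sub continuous_id)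
        apply intervalIntegral.integral_mono_on ht.1
        · exact Continuous.intervalIntegrable (by fun_prop) _ _
        · exact Continuous.intervalIntegrable (by fun_prop) _ _
        intro s hs
        have hts : t - s ∈ Set.Icc 0 Tstar := ⟨by linarith [hs.2], by linarith [hs.1, ht.2]⟩
        have k0 : 0 ≤ (t - s) ^ (α - 1) * mlE α α (-L * (t - s) ^ α) :=
          mul_nonneg (Real.rpow_nonneg hts.1 _) (hKpos (-L) le_rfl _ hts)
        have kM := (le_abs_self _).trans (hM _ hts)
        have hFb := hflip (P s) (hPm s) (Y s)
        have g1 : F s - -L * Y s ≤ 2 * L * max (Y s) 0 := by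
          have := (abs_le.1 hFb).2
          rcases le_total (Y s) 0 with h | h
          · rw [max_eq_right h]; rw [abs_of_nonpos h] at this
            simp only [hF]; linarith
          · rw [max_eq_left h]; rw [abs_of_nonneg h] at this
            simp only [hF]; linarith
        have m0 : 0 ≤ 2 * L * max (Y s) 0 := by positivity
        calc _ ≤ (t - s) ^ (α - 1) * mlE α α (-L * (t - s) ^ α) * (2 * L * max (Y s) 0) :=
              mul_le_mul_of_nonneg_left g1 k0
          _ ≤ M * (2 * L * max (Y s) 0) := mul_le_mul_of_nonneg_right kM m0
          _ = _ := by ring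
      rw [intervalIntegral.integral_const_mul] at e3
      linarith
    · exact mul_nonneg (by positivity)
        (intervalIntegral.integral_nonneg ht.1 fun s _ => le_max_right _ _)
  intro t ht
  have htT : t ∈ Set.Icc 0 T := ⟨ht.1, ht.2.trans hTstarT⟩
  set S := {r : ℝ | ∃ τ ∈ Set.Icc (0 : ℝ) t, ∃ x : ℝ, x ≠ 0 ∧ r = f τ x / x} with hS
  have hSb : ∀ r ∈ S, -L ≤ r ∧ r ≤ L := by
    rintro r ⟨τ, hτ, x, hx, rfl⟩
    have h := hflip τ ⟨hτ.1, hτ.2.trans htT.2⟩ x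
    rw [← abs_le, abs_div, div_le_iff₀ (abs_pos.2 hx)]
    exact h
  have hSne : f 0 1 / 1 ∈ S := ⟨0, ⟨le_rfl, ht.1⟩, 1, one_ne_zero, rfl⟩
  have hbb : BddBelow S := ⟨-L, fun r hr => (hSb r hr).1⟩
  have hba : BddAbove S := ⟨L, fun r hr => (hSb r hr).2⟩
  have hlow : -L ≤ alow t := by
    rw [halow t htT]; exact le_csInf ⟨_, hSne⟩ fun r hr => (hSb r hr).1
  have hup : -L ≤ astar t := by
    rw [hastar t htT]; exact (hSb _ hSne).1.trans (le_csSup hba hSne)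
  have hts : ∀ s ∈ Set.Icc 0 t, t - s ∈ Set.Icc 0 Tstar := fun s hs =>
    ⟨by linarith [hs.2], by linarith [hs.1, ht.2]⟩
  have hmem : ∀ s ∈ Set.Icc 0 t, Y s ≠ 0 → F s / Y s ∈ S := fun s hs h0 => by
    refine ⟨s, hs, Y s, h0, ?_⟩
    simp only [hF]; rw [hPe s ⟨hs.1, hs.2.trans htT.2⟩]
  have hz : ∀ s, Y s = 0 → F s = 0 := fun s h => by
    simp only [hF]; rw [h]; exact hf0 _ (hPm s)
  rw [← hYe t htT]
  constructor
  · rw [voc (astar t) t htT]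
    have : 0 ≤ ∫ s in (0:ℝ)..t,
        (t - s) ^ (α - 1) * mlE α α (astar t * (t - s) ^ α) * (F s - astar t * Y s) := by
      refine intervalIntegral.integral_nonneg ht.1 fun s hs => ?_
      refine mul_nonneg (mul_nonneg (Real.rpow_nonneg (hts s hs).1 _) (hKpos _ hup _ (hts s hs))) ?_
      rcases (hneg s ⟨hs.1, hs.2.trans ht.2⟩).lt_or_eq with h | h
      · have := le_csSup hba (hmem s hs h.ne)
        rw [← hastar t htT, div_le_iff_of_neg h] at this
        linarith
      · rw [hz s h, h]; simp
    linarith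
  · rw [voc (alow t) t htT]
    have : 0 ≤ ∫ s in (0:ℝ)..t,
        -((t - s) ^ (α - 1) * mlE α α (alow t * (t - s) ^ α) * (F s - alow t * Y s)) := by
      refine intervalIntegral.integral_nonneg ht.1 fun s hs => ?_
      rw [← mul_neg]
      refine mul_nonneg (mul_nonneg (Real.rpow_nonneg (hts s hs).1 _) (hKpos _ hlow _ (hts s hs))) ?_
      rcases (hneg s ⟨hs.1, hs.2.trans ht.2⟩).lt_or_eq with h | h
      · have := csInf_le hbb (hmem s hs h.ne)
        rw [← halow t htT, le_div_iff_of_neg h] at this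
        linarith
      · rw [hz s h, h]; simp
    rw [intervalIntegral.integral_neg] at this
    linarith
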